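/- arXiv:1812.10789 — 2 statements merged into one kernel-verified Lean document; each statement's English description precedes it below -/
import Mathlib

section
/- Let (X,σ) be a subshift of Σ = A^ℤ (with the Cantor metric) having finite separation numbers. Then for every δ ∈ (0,1] the lower and upper box dimensions of [X] in ([Σ],D_δ) are independent of δ, and moreover ac_(σ|_X) = dim_B^-([X]) and ac¯(σ|_X) = dim_B^+([X]), where the box dimensions are taken with respect to D_1. -/
open Filter Topology Set MeasureTheory
open scoped ENNReal

noncomputable section

/-- The upper density of a set of natural numbers. -/
def upperDensity (E : Set ℕ) : ℝ :=
  Filter.limsup (fun n : ℕ =>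
    (∑ k ∈ Finset.range n, E.indicator (fun _ => (1 : ℝ)) k) / n) Filter.atTop

/-- `S` is an `(f,δ,ν)`-separated subset of `X`, with respect to the distance `ρ`. -/
def IsSepSet {α : Type*} (ρ : α → α → ℝ) (f : α → α) (X : Set α) (δ ν : ℝ) (S : Set α) : Prop :=
  S ⊆ X ∧ ∀ x ∈ S, ∀ y ∈ S, x ≠ y → ν ≤ upperDensity {k : ℕ | δ ≤ ρ (f^[k] x) (f^[k] y)}

/-- The asymptotic separation number `Sep(f,δ,ν)` of `f` on `X`. -/
def sepNum {α : Type*} (ρ : α → α → ℝ) (f : α → α) (X : Set α) (δ ν : ℝ) : ℕ∞ :=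
  ⨆ (S : Set α) (_ : IsSepSet ρ f X δ ν S), S.encard

/-- The quantity `log s / (- log ν)`, with value `∞` if `s = ∞`. -/
def logRatio (s : ℕ∞) (ν : ℝ) : ℝ≥0∞ :=
  if s = ⊤ then ⊤ else ENNReal.ofReal (Real.log (s.toNat : ℝ) / (- Real.log ν))

/-- The lower amorphic complexity of `f` on `X`. -/
def acLower {α : Type*} (ρ : α → α → ℝ) (f : α → α) (X : Set α) : ℝ≥0∞ :=
  ⨆ (δ : ℝ) (_ : 0 < δ),
    Filter.liminf (fun ν : ℝ => logRatio (sepNum ρ f X δ ν) ν) (𝓝[>] (0 : ℝ))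

/-- The upper amorphic complexity of `f` on `X`. -/
def acUpper {α : Type*} (ρ : α → α → ℝ) (f : α → α) (X : Set α) : ℝ≥0∞ :=
  ⨆ (δ : ℝ) (_ : 0 < δ),
    Filter.limsup (fun ν : ℝ => logRatio (sepNum ρ f X δ ν) ν) (𝓝[>] (0 : ℝ))

/-- The left shift on `A^ℤ`. -/
def shift {A : Type*} (x : ℤ → A) : ℤ → A := fun n => x (n + 1)

open scoped Classical in
/-- The Cantor metric `d(x,y) = 2^{-min{|k| : x_k ≠ y_k}}` on `A^ℤ`. -/
def cantorDist {A : Type*} (x y : ℤ → A) : ℝ :=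
  if x = y then 0
  else (2 : ℝ) ^ (-((sInf {n : ℕ | ∃ k : ℤ, k.natAbs = n ∧ x k ≠ y k} : ℕ) : ℤ))

/-- The Besicovitch pseudometric `D_1` on `A^ℤ`. -/
def besD1 {A : Type*} (x y : ℤ → A) : ℝ :=
  upperDensity {k : ℕ | x (k : ℤ) ≠ y (k : ℤ)}

/-- The Besicovitch pseudometric `D_B` associated to a map `f` and a distance `ρ`. -/
def besDB {α : Type*} (ρ : α → α → ℝ) (f : α → α) (x y : α) : ℝ :=
  Filter.limsup (fun n : ℕ => (∑ k ∈ Finset.range n, ρ (f^[k] x) (f^[k] y)) / n) Filter.atTop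

/-- The pseudometric `D_δ` on `A^ℤ` associated to a metric `ρ` on `A^ℤ`. -/
def Ddelta {A : Type*} (ρ : (ℤ → A) → (ℤ → A) → ℝ) (δ : ℝ) (x y : ℤ → A) : ℝ :=
  upperDensity {k : ℕ | δ ≤ ρ (shift^[k] x) (shift^[k] y)}

/-- The closure of the two-sided shift orbit of `x₀`. -/
def orbitClosure {A : Type*} [TopologicalSpace A] (x₀ : ℤ → A) : Set (ℤ → A) :=
  closure {y | ∃ k : ℤ, y = fun n => x₀ (n + k)}

/-- The extension of a constant length substitution `θ : A → A^ℓ` to `A^ℤ`,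
via `θ(x)_{ℓk+i} = θ(x_k)_i`. -/
def substApply {A : Type*} {ℓ : ℕ} (hℓ : 0 < ℓ) (θ : A → Fin ℓ → A)
    (x : ℤ → A) : ℤ → A := fun n =>
  θ (x (n / (ℓ : ℤ))) ⟨(n % (ℓ : ℤ)).toNat, by
    have h1 : 0 ≤ n % (ℓ : ℤ) := Int.emod_nonneg n (by exact_mod_cast hℓ.ne')
    have h2 : n % (ℓ : ℤ) < (ℓ : ℤ) := Int.emod_lt_of_pos n (by exact_mod_cast hℓ)
    omega⟩

/-- A constant length substitution is primitive if some power `θ^m` of it is such that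
every letter `b` occurs in every word `θ^m(a)`. -/
def IsPrimitive {A : Type*} {ℓ : ℕ} (hℓ : 0 < ℓ) (θ : A → Fin ℓ → A) : Prop :=
  ∃ m : ℕ, 1 ≤ m ∧ ∀ a b : A, ∃ j : ℤ, 0 ≤ j ∧ j < (ℓ : ℤ) ^ m ∧
    (substApply hℓ θ)^[m] (fun _ => a) j = b

open scoped Classical in
/-- The number of positions at which the words `θ(a)` and `θ(b)` agree. -/
def coincCount {A : Type*} {ℓ : ℕ} (θ : A → Fin ℓ → A) (a b : A) : ℕ :=
  (Finset.univ.filter (fun j : Fin ℓ => θ a j = θ b j)).card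

/-- `c(θ)`, the minimum of `coincCount θ a b` over pairs `a ≠ b`. -/
def cMin {A : Type*} {ℓ : ℕ} (θ : A → Fin ℓ → A) : ℕ :=
  sInf {n : ℕ | ∃ a b : A, a ≠ b ∧ coincCount θ a b = n}

/-- `C(θ)`, the maximum of `coincCount θ a b` over pairs `a ≠ b`. -/
def cMax {A : Type*} {ℓ : ℕ} (θ : A → Fin ℓ → A) : ℕ :=
  sSup {n : ℕ | ∃ a b : A, a ≠ b ∧ coincCount θ a b = n}

/-- `S` is `ε`-separated with respect to the distance `ρ`. -/
def IsEpsSeparated {α : Type*} (ρ : α → α → ℝ) (ε : ℝ) (S : Set α) : Prop :=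
  ∀ x ∈ S, ∀ y ∈ S, x ≠ y → ε ≤ ρ x y

/-- `M_ε(E)`: the maximal cardinality of an `ε`-separated subset of `E`. -/
def packNum {α : Type*} (ρ : α → α → ℝ) (ε : ℝ) (E : Set α) : ℕ∞ :=
  ⨆ (S : Set α) (_ : S ⊆ E ∧ IsEpsSeparated ρ ε S), S.encard

/-- The lower box dimension of `E` with respect to the distance `ρ`. -/
def lowerBoxDim {α : Type*} (ρ : α → α → ℝ) (E : Set α) : ℝ≥0∞ :=
  Filter.liminf (fun ε : ℝ => logRatio (packNum ρ ε E) ε) (𝓝[>] (0 : ℝ))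

/-- The upper box dimension of `E` with respect to the distance `ρ`. -/
def upperBoxDim {α : Type*} (ρ : α → α → ℝ) (E : Set α) : ℝ≥0∞ :=
  Filter.limsup (fun ε : ℝ => logRatio (packNum ρ ε E) ε) (𝓝[>] (0 : ℝ))

/-- Mean equicontinuity of `f` on `X` with respect to the distance `ρ`. -/
def MeanEquicontinuousOn {α : Type*} (ρ : α → α → ℝ) (f : α → α) (X : Set α) : Prop :=
  ∀ ν : ℝ, 0 < ν → ∃ δ : ℝ, 0 < δ ∧ ∀ x ∈ X, ∀ y ∈ X, ρ x y < δ → besDB ρ f x y < ν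

/-- The subshift `X` has discrete spectrum: for every shift-invariant Borel probability
measure giving `X` full measure (there is exactly one for the systems under consideration),
`L²` has a Hilbert basis of eigenfunctions of the shift. -/
def HasDiscreteSpectrum {A : Type*} [MeasurableSpace A] (X : Set (ℤ → A)) : Prop :=
  ∀ μ : Measure (ℤ → A), IsProbabilityMeasure μ → MeasurePreserving shift μ μ → μ X = 1 →
    ∃ (ι : Type) (b : HilbertBasis ι ℂ (Lp ℂ 2 μ)), ∀ i : ι, ∃ c : ℂ,
      (fun z => (b i : Lp ℂ 2 μ) (shift z)) =ᵐ[μ] (fun z => c * (b i : Lp ℂ 2 μ) z)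

end

/-! The sets counted by `D_δ` are finite unions of translates of the set counted by `D_1`: when
`2^{-N} ≤ δ`, a time `k` is counted by `D_δ` only if `x` and `y` differ at one of the positions
`k - N, …, k + N`. Upper density is subadditive and translation invariant, so
`D_1 ≤ D_δ ≤ (2N + 1) D_1` for `δ ≤ 1`. Box dimensions are invariant under bi-Lipschitz changes of
distance, since a constant factor in `ε` changes `-log ε` only by a bounded amount. Finally
`Sep(σ|_X, δ, ν)` is the packing number of `X` for `D_δ` at scale `ν`. -/

section UpperDensity

/-- The proportion of the first `n` natural numbers that lie in `E`; `upperDensity E` is its limit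
superior as `n → ∞`. At `n = 0` it takes the value `0`. -/
noncomputable def initialFrequency (E : Set ℕ) (n : ℕ) : ℝ :=
  (∑ k ∈ Finset.range n, E.indicator (fun _ => (1 : ℝ)) k) / n

variable {E F : Set ℕ}

lemma initialFrequency_nonneg (E : Set ℕ) (n : ℕ) : 0 ≤ initialFrequency E n :=
  div_nonneg (Finset.sum_nonneg fun k _ => indicator_nonneg (fun _ _ => zero_le_one) k)
    n.cast_nonneg

lemma initialFrequency_mono (h : E ⊆ F) (n : ℕ) : initialFrequency E n ≤ initialFrequency F n := by
  unfold initialFrequency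
  gcongr

lemma initialFrequency_le_one (E : Set ℕ) (n : ℕ) : initialFrequency E n ≤ 1 :=
  calc initialFrequency E n ≤ initialFrequency univ n := initialFrequency_mono (subset_univ E) n
    _ ≤ 1 := by simpa [initialFrequency] using div_self_le_one (n : ℝ)

lemma initialFrequency_union_le (E F : Set ℕ) (n : ℕ) :
    initialFrequency (E ∪ F) n ≤ initialFrequency E n + initialFrequency F n := by
  simp only [initialFrequency, ← add_div, ← Finset.sum_add_distrib]
  gcongr with k
  by_cases hE : k ∈ E <;> by_cases hF : k ∈ F <;> simp [hE, hF]

lemma abs_initialFrequency_preimage_succ_sub_le (E : Set ℕ) (n : ℕ) :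
    |initialFrequency (Nat.succ ⁻¹' E) n - initialFrequency E n| ≤ 1 / n := by
  set f : ℕ → ℝ := E.indicator fun _ => 1
  have hf0 (k : ℕ) : 0 ≤ f k := indicator_nonneg (fun _ _ => zero_le_one) k
  have hf1 (k : ℕ) : f k ≤ 1 := indicator_le_self' (fun _ _ => zero_le_one) k
  have hsum : ∑ k ∈ Finset.range n, f (k + 1) - ∑ k ∈ Finset.range n, f k = f n - f 0 := by
    rw [← Finset.sum_sub_distrib, Finset.sum_range_sub]
  calc |initialFrequency (Nat.succ ⁻¹' E) n - initialFrequency E n|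
      = |(∑ k ∈ Finset.range n, f (k + 1) - ∑ k ∈ Finset.range n, f k) / n| := by
        rw [sub_div]
        rfl
    _ = |f n - f 0| / n := by rw [hsum, abs_div, Nat.abs_cast]
    _ ≤ 1 / n := by
        gcongr
        exact abs_sub_le_of_nonneg_of_le (hf0 n) (hf1 n) (hf0 0) (hf1 0)

lemma isBoundedUnder_le_initialFrequency (E : Set ℕ) :
    IsBoundedUnder (· ≤ ·) atTop (initialFrequency E) :=
  isBoundedUnder_of ⟨1, initialFrequency_le_one E⟩

lemma isBoundedUnder_ge_initialFrequency (E : Set ℕ) :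
    IsBoundedUnder (· ≥ ·) atTop (initialFrequency E) :=
  isBoundedUnder_of ⟨0, initialFrequency_nonneg E⟩

lemma upperDensity_empty : upperDensity ∅ = 0 := by
  simp [upperDensity]

lemma upperDensity_mono (h : E ⊆ F) : upperDensity E ≤ upperDensity F :=
  limsup_le_limsup (Eventually.of_forall (initialFrequency_mono h))
    (isBoundedUnder_ge_initialFrequency E).isCoboundedUnder_le
    (isBoundedUnder_le_initialFrequency F)

lemma upperDensity_union_le (E F : Set ℕ) :
    upperDensity (E ∪ F) ≤ upperDensity E + upperDensity F := by
  have hE := isBoundedUnder_le_initialFrequency E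
  have hF := isBoundedUnder_le_initialFrequency F
  calc upperDensity (E ∪ F) ≤ limsup (initialFrequency E + initialFrequency F) atTop :=
        limsup_le_limsup (Eventually.of_forall (initialFrequency_union_le E F))
          (isBoundedUnder_ge_initialFrequency _).isCoboundedUnder_le
          (isBoundedUnder_le_add hE hF)
    _ ≤ upperDensity E + upperDensity F :=
        limsup_add_le (isBoundedUnder_ge_initialFrequency E) hE
          (isBoundedUnder_ge_initialFrequency F).isCoboundedUnder_le hF

lemma upperDensity_biUnion_le {ι : Type*} (s : Finset ι) (E : ι → Set ℕ) :
    upperDensity (⋃ i ∈ s, E i) ≤ ∑ i ∈ s, upperDensity (E i) := by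
  classical
  induction s using Finset.induction_on with
  | empty => simp [upperDensity_empty]
  | insert i s hi ih =>
    rw [Finset.set_biUnion_insert, Finset.sum_insert hi]
    exact (upperDensity_union_le _ _).trans (by gcongr)

lemma upperDensity_le_of_tendsto_sub
    (h : Tendsto (fun n => initialFrequency E n - initialFrequency F n) atTop (𝓝 0)) :
    upperDensity E ≤ upperDensity F := by
  have hF := isBoundedUnder_le_initialFrequency F
  calc upperDensity E
      = limsup (initialFrequency F + fun n => initialFrequency E n - initialFrequency F n) atTop :=
        congrArg (limsup · atTop) (by ext n; simp [initialFrequency])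
    _ ≤ upperDensity F + limsup (fun n => initialFrequency E n - initialFrequency F n) atTop :=
        limsup_add_le (isBoundedUnder_ge_initialFrequency F) hF
          h.isBoundedUnder_ge.isCoboundedUnder_le h.isBoundedUnder_le
    _ = upperDensity F := by rw [h.limsup_eq, add_zero]

lemma upperDensity_preimage_succ (E : Set ℕ) : upperDensity (Nat.succ ⁻¹' E) = upperDensity E := by
  have h : Tendsto (fun n => initialFrequency (Nat.succ ⁻¹' E) n - initialFrequency E n) atTop
      (𝓝 0) :=
    squeeze_zero_norm (abs_initialFrequency_preimage_succ_sub_le E)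
      tendsto_one_div_atTop_nhds_zero_nat
  exact le_antisymm (upperDensity_le_of_tendsto_sub h)
    (upperDensity_le_of_tendsto_sub (by simpa using h.neg))

lemma upperDensity_add_int (E : Set ℤ) (j : ℤ) :
    upperDensity {k : ℕ | (k : ℤ) + j ∈ E} = upperDensity {k : ℕ | (k : ℤ) ∈ E} := by
  have hper : Function.Periodic (fun i : ℤ => upperDensity {k : ℕ | (k : ℤ) + i ∈ E}) 1 := by
    intro i
    calc upperDensity {k : ℕ | (k : ℤ) + (i + 1) ∈ E}
        = upperDensity (Nat.succ ⁻¹' {k : ℕ | (k : ℤ) + i ∈ E}) := by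
          simp only [preimage_ofPred_eq, Nat.cast_succ, add_assoc, add_comm i]
      _ = upperDensity {k : ℕ | (k : ℤ) + i ∈ E} := upperDensity_preimage_succ _
  simpa using hper.int_mul_eq j

end UpperDensity

section Besicovitch

variable {A : Type*}

lemma iterate_shift_apply (x : ℤ → A) (k : ℕ) (j : ℤ) : shift^[k] x j = x (k + j) := by
  induction k generalizing j with
  | zero => simp
  | succ k ih =>
    rw [Function.iterate_succ_apply', shift, ih]
    congr 1
    push_cast
    ring

lemma inv_two_pow_le_cantorDist_iff {x y : ℤ → A} {N : ℕ} :
    (2⁻¹ : ℝ) ^ N ≤ cantorDist x y ↔ ∃ j ∈ Finset.Icc (-(N : ℤ)) N, x j ≠ y j := by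
  by_cases hxy : x = y
  · simp [cantorDist, hxy]
  set S : Set ℕ := {n | ∃ j : ℤ, j.natAbs = n ∧ x j ≠ y j}
  have hS : S.Nonempty := by
    obtain ⟨j, hj⟩ := Function.ne_iff.mp hxy
    exact ⟨j.natAbs, j, rfl, hj⟩
  have hdist : cantorDist x y = 2⁻¹ ^ sInf S := by
    rw [cantorDist, if_neg hxy, zpow_neg, zpow_natCast, inv_pow]
  rw [hdist, pow_le_pow_iff_right_of_lt_one₀ (by norm_num) (by norm_num)]
  constructor
  · intro hN
    obtain ⟨j, hj, hne⟩ := Nat.sInf_mem hS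
    exact ⟨j, Finset.mem_Icc.mpr (by omega), hne⟩
  · rintro ⟨j, hj, hne⟩
    rw [Finset.mem_Icc] at hj
    exact (Nat.sInf_le (show j.natAbs ∈ S from ⟨j, rfl, hne⟩)).trans (by omega)

lemma Ddelta_antitone (ρ : (ℤ → A) → (ℤ → A) → ℝ) (x y : ℤ → A) :
    Antitone fun δ => Ddelta ρ δ x y :=
  fun _ _ hδ => upperDensity_mono fun _ hk => hδ.trans hk

lemma Ddelta_cantorDist_one : Ddelta (A := A) cantorDist 1 = besD1 := by
  ext x y
  have h (k : ℕ) : 1 ≤ cantorDist (shift^[k] x) (shift^[k] y) ↔ x k ≠ y k := by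
    simpa [iterate_shift_apply] using
      inv_two_pow_le_cantorDist_iff (x := shift^[k] x) (y := shift^[k] y) (N := 0)
  simp only [Ddelta, besD1, h]

lemma Ddelta_cantorDist_le_mul_besD1 {δ : ℝ} {N : ℕ} (hN : (2⁻¹ : ℝ) ^ N ≤ δ) (x y : ℤ → A) :
    Ddelta cantorDist δ x y ≤ (2 * N + 1) * besD1 x y := by
  have hcover : {k : ℕ | δ ≤ cantorDist (shift^[k] x) (shift^[k] y)} ⊆
      ⋃ j ∈ Finset.Icc (-(N : ℤ)) N, {k : ℕ | (k : ℤ) + j ∈ {i | x i ≠ y i}} := by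
    intro k hk
    obtain ⟨j, hj, hne⟩ := inv_two_pow_le_cantorDist_iff.mp (hN.trans hk)
    rw [iterate_shift_apply, iterate_shift_apply] at hne
    exact mem_biUnion hj hne
  have hcard : ((Finset.Icc (-(N : ℤ)) N).card : ℝ) = 2 * N + 1 := by
    rw [Int.card_Icc, show ((N : ℤ) + 1 - -N).toNat = 2 * N + 1 by omega]
    push_cast
    rfl
  calc Ddelta cantorDist δ x y
      ≤ ∑ j ∈ Finset.Icc (-(N : ℤ)) N, upperDensity {k : ℕ | (k : ℤ) + j ∈ {i | x i ≠ y i}} :=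
        (upperDensity_mono hcover).trans (upperDensity_biUnion_le _ _)
    _ = (2 * N + 1) * besD1 x y := by
        simp only [upperDensity_add_int, Finset.sum_const, nsmul_eq_mul, hcard]
        rfl

lemma exists_Ddelta_cantorDist_le_mul (A : Type*) {δ : ℝ} (hδ : 0 < δ) :
    ∃ C : ℝ, 0 < C ∧
      ∀ x y : ℤ → A, Ddelta cantorDist δ x y ≤ C * Ddelta cantorDist 1 x y := by
  obtain ⟨N, hN⟩ := exists_pow_lt_of_lt_one hδ (by norm_num : (2⁻¹ : ℝ) < 1)
  rw [Ddelta_cantorDist_one]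
  exact ⟨2 * N + 1, by positivity, Ddelta_cantorDist_le_mul_besD1 hN.le⟩

lemma sepNum_shift (ρ : (ℤ → A) → (ℤ → A) → ℝ) (X : Set (ℤ → A)) (δ ν : ℝ) :
    sepNum ρ shift X δ ν = packNum (Ddelta ρ δ) ν X := rfl

end Besicovitch

section LogRatio

lemma logRatio_mono {s t : ℕ∞} (hst : s ≤ t) {ε : ℝ} (hε0 : 0 ≤ ε) (hε1 : ε ≤ 1) :
    logRatio s ε ≤ logRatio t ε := by
  by_cases ht : t = ⊤
  · simp [logRatio, ht]
  have hs : s ≠ ⊤ := ne_top_of_le_ne_top ht hst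
  have hlog : Real.log s.toNat ≤ Real.log t.toNat := by
    rcases s.toNat.eq_zero_or_pos with h | h
    · simpa [h] using Real.log_natCast_nonneg t.toNat
    · exact Real.log_le_log (mod_cast h) (mod_cast ENat.toNat_le_toNat hst ht)
  simp only [logRatio, if_neg hs, if_neg ht]
  exact ENNReal.ofReal_le_ofReal
    (div_le_div_of_nonneg_right hlog (neg_nonneg.mpr (Real.log_nonpos hε0 hε1)))

lemma logRatio_eq_mul_logRatio (s : ℕ∞) {ε η : ℝ} (hε : ε ∈ Ioo 0 1) (hη : η ∈ Ioo 0 1) :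
    logRatio s η = logRatio s ε * ENNReal.ofReal (Real.log ε / Real.log η) := by
  have hlogε : Real.log ε < 0 := Real.log_neg hε.1 hε.2
  have hlogη : Real.log η < 0 := Real.log_neg hη.1 hη.2
  have hpos : 0 < Real.log ε / Real.log η := div_pos_of_neg_of_neg hlogε hlogη
  by_cases hs : s = ⊤
  · simp [logRatio, hs, ENNReal.top_mul, hpos]
  · rw [logRatio, logRatio, if_neg hs, if_neg hs, ← ENNReal.ofReal_mul' hpos.le]
    congr 1
    field_simp [hlogε.ne, hlogη.ne]

variable {c : ℝ}

lemma map_const_mul_nhdsGT_zero (hc : 0 < c) : map (c * ·) (𝓝[>] 0) = 𝓝[>] (0 : ℝ) := by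
  conv_lhs => rw [← comap_mulLeft_nhdsGT_zero hc]
  exact map_comap_of_surjective (mul_left_surjective₀ hc.ne') _

lemma tendsto_const_mul_nhdsGT_zero (hc : 0 < c) : Tendsto (c * ·) (𝓝[>] 0) (𝓝[>] (0 : ℝ)) :=
  (map_const_mul_nhdsGT_zero hc).le

lemma tendsto_log_div_log_const_mul (hc : 0 < c) :
    Tendsto (fun ε => Real.log ε / Real.log (c * ε)) (𝓝[>] 0) (𝓝 1) := by
  have hinv : Tendsto (fun ε => Real.log c / Real.log (c * ε)) (𝓝[>] 0) (𝓝 0) :=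
    (Real.tendsto_log_nhdsGT_zero.comp (tendsto_const_mul_nhdsGT_zero hc)).const_div_atBot _
  have hone : Tendsto (fun ε => 1 - Real.log c / Real.log (c * ε)) (𝓝[>] 0) (𝓝 1) := by
    simpa using hinv.const_sub 1
  refine hone.congr' ?_
  have hlt : ∀ᶠ ε : ℝ in 𝓝[>] 0, c * ε ∈ Ioo 0 1 :=
    (tendsto_const_mul_nhdsGT_zero hc).eventually (Ioo_mem_nhdsGT one_pos)
  filter_upwards [hlt, self_mem_nhdsWithin] with ε hcε hε
  have hlog : Real.log (c * ε) ≠ 0 := (Real.log_neg hcε.1 hcε.2).ne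
  rw [one_sub_div hlog, Real.log_mul hc.ne' (ne_of_gt hε), add_sub_cancel_left]

lemma eventually_logRatio_const_mul (f : ℝ → ℕ∞) (hc : 0 < c) :
    (fun ε => logRatio (f (c * ε)) (c * ε)) =ᶠ[𝓝[>] 0]
      (fun ε => logRatio (f (c * ε)) ε) *
        fun ε => ENNReal.ofReal (Real.log ε / Real.log (c * ε)) := by
  have hsmall : ∀ᶠ ε : ℝ in 𝓝[>] 0, ε ∈ Ioo 0 1 := Ioo_mem_nhdsGT one_pos
  filter_upwards [hsmall, (tendsto_const_mul_nhdsGT_zero hc).eventually hsmall] with ε hε hcε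
  exact logRatio_eq_mul_logRatio _ hε hcε

lemma tendsto_ofReal_log_div_log_const_mul (hc : 0 < c) :
    Tendsto (fun ε => ENNReal.ofReal (Real.log ε / Real.log (c * ε))) (𝓝[>] 0) (𝓝 1) := by
  simpa using ENNReal.tendsto_ofReal (tendsto_log_div_log_const_mul hc)

lemma liminf_logRatio_const_mul_le (f : ℝ → ℕ∞) (hc : 0 < c) :
    liminf (fun ε => logRatio (f (c * ε)) ε) (𝓝[>] 0) ≤
      liminf (fun ε => logRatio (f ε) ε) (𝓝[>] 0) :=
  calc liminf (fun ε => logRatio (f (c * ε)) ε) (𝓝[>] 0)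
      = liminf (fun ε => logRatio (f (c * ε)) ε) (𝓝[>] 0) *
          liminf (fun ε => ENNReal.ofReal (Real.log ε / Real.log (c * ε))) (𝓝[>] 0) := by
        rw [(tendsto_ofReal_log_div_log_const_mul hc).liminf_eq, mul_one]
    _ ≤ liminf (fun ε => logRatio (f (c * ε)) (c * ε)) (𝓝[>] 0) :=
        ENNReal.le_liminf_mul.trans_eq (liminf_congr (eventually_logRatio_const_mul f hc)).symm
    _ = liminf (fun ε => logRatio (f ε) ε) (map (c * ·) (𝓝[>] 0)) := rfl
    _ = liminf (fun ε => logRatio (f ε) ε) (𝓝[>] 0) := by rw [map_const_mul_nhdsGT_zero hc]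

lemma limsup_logRatio_const_mul_le (f : ℝ → ℕ∞) (hc : 0 < c) :
    limsup (fun ε => logRatio (f (c * ε)) ε) (𝓝[>] 0) ≤
      limsup (fun ε => logRatio (f ε) ε) (𝓝[>] 0) :=
  calc limsup (fun ε => logRatio (f (c * ε)) ε) (𝓝[>] 0)
      = limsup (fun ε => logRatio (f (c * ε)) ε) (𝓝[>] 0) *
          liminf (fun ε => ENNReal.ofReal (Real.log ε / Real.log (c * ε))) (𝓝[>] 0) := by
        rw [(tendsto_ofReal_log_div_log_const_mul hc).liminf_eq, mul_one]
    _ ≤ limsup (fun ε => logRatio (f (c * ε)) (c * ε)) (𝓝[>] 0) :=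
        ENNReal.le_limsup_mul.trans_eq (limsup_congr (eventually_logRatio_const_mul f hc)).symm
    _ = limsup (fun ε => logRatio (f ε) ε) (map (c * ·) (𝓝[>] 0)) := rfl
    _ = limsup (fun ε => logRatio (f ε) ε) (𝓝[>] 0) := by rw [map_const_mul_nhdsGT_zero hc]

end LogRatio

section BoxDimension

variable {α : Type*} {ρ ρ' : α → α → ℝ} {C : ℝ} {E : Set α}

lemma packNum_le_packNum_inv_mul (hC : 0 < C) (h : ∀ x ∈ E, ∀ y ∈ E, ρ x y ≤ C * ρ' x y) (ε : ℝ) :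
    packNum ρ ε E ≤ packNum ρ' (C⁻¹ * ε) E := by
  refine iSup₂_le fun S ⟨hSE, hS⟩ => le_iSup₂_of_le S ⟨hSE, fun x hx y hy hxy => ?_⟩ le_rfl
  rw [inv_mul_le_iff₀ hC]
  exact (hS x hx y hy hxy).trans (h x (hSE hx) y (hSE hy))

lemma eventually_logRatio_packNum_le (hC : 0 < C)
    (h : ∀ x ∈ E, ∀ y ∈ E, ρ x y ≤ C * ρ' x y) :
    ∀ᶠ ε in 𝓝[>] 0, logRatio (packNum ρ ε E) ε ≤ logRatio (packNum ρ' (C⁻¹ * ε) E) ε := by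
  filter_upwards [Ioo_mem_nhdsGT one_pos] with ε hε
  exact logRatio_mono (packNum_le_packNum_inv_mul hC h ε) hε.1.le hε.2.le

lemma lowerBoxDim_le_of_le_mul (hC : 0 < C) (h : ∀ x ∈ E, ∀ y ∈ E, ρ x y ≤ C * ρ' x y) :
    lowerBoxDim ρ E ≤ lowerBoxDim ρ' E :=
  (liminf_le_liminf (eventually_logRatio_packNum_le hC h)).trans
    (liminf_logRatio_const_mul_le (packNum ρ' · E) (inv_pos.mpr hC))

lemma upperBoxDim_le_of_le_mul (hC : 0 < C) (h : ∀ x ∈ E, ∀ y ∈ E, ρ x y ≤ C * ρ' x y) :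
    upperBoxDim ρ E ≤ upperBoxDim ρ' E :=
  (limsup_le_limsup (eventually_logRatio_packNum_le hC h)).trans
    (limsup_logRatio_const_mul_le (packNum ρ' · E) (inv_pos.mpr hC))

end BoxDimension

section AmorphicComplexity

variable {A : Type*} {δ : ℝ}

lemma lowerBoxDim_Ddelta_le (hδ : 0 < δ) (X : Set (ℤ → A)) :
    lowerBoxDim (Ddelta cantorDist δ) X ≤ lowerBoxDim (Ddelta cantorDist 1) X := by
  obtain ⟨C, hC, h⟩ := exists_Ddelta_cantorDist_le_mul A hδ
  exact lowerBoxDim_le_of_le_mul hC fun x _ y _ => h x y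

lemma upperBoxDim_Ddelta_le (hδ : 0 < δ) (X : Set (ℤ → A)) :
    upperBoxDim (Ddelta cantorDist δ) X ≤ upperBoxDim (Ddelta cantorDist 1) X := by
  obtain ⟨C, hC, h⟩ := exists_Ddelta_cantorDist_le_mul A hδ
  exact upperBoxDim_le_of_le_mul hC fun x _ y _ => h x y

lemma lowerBoxDim_Ddelta_eq (hδ : δ ∈ Ioc 0 1) (X : Set (ℤ → A)) :
    lowerBoxDim (Ddelta cantorDist δ) X = lowerBoxDim (Ddelta cantorDist 1) X :=
  (lowerBoxDim_Ddelta_le hδ.1 X).antisymm <| lowerBoxDim_le_of_le_mul one_pos fun x _ y _ => by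
    simpa using Ddelta_antitone cantorDist x y hδ.2

lemma upperBoxDim_Ddelta_eq (hδ : δ ∈ Ioc 0 1) (X : Set (ℤ → A)) :
    upperBoxDim (Ddelta cantorDist δ) X = upperBoxDim (Ddelta cantorDist 1) X :=
  (upperBoxDim_Ddelta_le hδ.1 X).antisymm <| upperBoxDim_le_of_le_mul one_pos fun x _ y _ => by
    simpa using Ddelta_antitone cantorDist x y hδ.2

lemma acLower_shift_eq_lowerBoxDim (X : Set (ℤ → A)) :
    acLower cantorDist shift X = lowerBoxDim (Ddelta cantorDist 1) X := by
  simp only [acLower, sepNum_shift]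
  exact le_antisymm (iSup₂_le fun _ hδ => lowerBoxDim_Ddelta_le hδ X)
    (le_iSup₂_of_le 1 one_pos le_rfl)

lemma acUpper_shift_eq_upperBoxDim (X : Set (ℤ → A)) :
    acUpper cantorDist shift X = upperBoxDim (Ddelta cantorDist 1) X := by
  simp only [acUpper, sepNum_shift]
  exact le_antisymm (iSup₂_le fun _ hδ => upperBoxDim_Ddelta_le hδ X)
    (le_iSup₂_of_le 1 one_pos le_rfl)

theorem amorphic_complexity_eq_boxDim_besicovitch_general (X : Set (ℤ → A)) :
    (∀ δ δ' : ℝ, 0 < δ → δ ≤ 1 → 0 < δ' → δ' ≤ 1 →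
      lowerBoxDim (Ddelta cantorDist δ) X = lowerBoxDim (Ddelta cantorDist δ') X ∧
      upperBoxDim (Ddelta cantorDist δ) X = upperBoxDim (Ddelta cantorDist δ') X) ∧
    acLower cantorDist shift X = lowerBoxDim (Ddelta cantorDist 1) X ∧
    acUpper cantorDist shift X = upperBoxDim (Ddelta cantorDist 1) X := by
  refine ⟨fun δ δ' hδ hδ1 hδ' hδ1' => ⟨?_, ?_⟩, acLower_shift_eq_lowerBoxDim X,
    acUpper_shift_eq_upperBoxDim X⟩
  · rw [lowerBoxDim_Ddelta_eq ⟨hδ, hδ1⟩, lowerBoxDim_Ddelta_eq ⟨hδ', hδ1'⟩]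
  · rw [upperBoxDim_Ddelta_eq ⟨hδ, hδ1⟩, upperBoxDim_Ddelta_eq ⟨hδ', hδ1'⟩]

end AmorphicComplexity

/-- For a subshift `X` with finite separation numbers, the lower and
upper box dimensions of `[X]` in the Besicovitch space `([Σ],D_δ)` do not depend on
`δ ∈ (0,1]`, and the lower/upper amorphic complexity of `(X,σ)` equals the lower/upper
box dimension of `[X]` (taken with respect to `D_1`). -/
theorem amorphic_complexity_eq_boxDim_besicovitch
    {A : Type} [Fintype A] [TopologicalSpace A] [DiscreteTopology A]
    (X : Set (ℤ → A)) (hne : X.Nonempty) (hcl : IsClosed X) (hinv : shift '' X = X)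
    (hfin : ∀ δ : ℝ, 0 < δ → ∀ ν : ℝ, 0 < ν → ν ≤ 1 → sepNum cantorDist shift X δ ν ≠ ⊤) :
    (∀ δ δ' : ℝ, 0 < δ → δ ≤ 1 → 0 < δ' → δ' ≤ 1 →
      lowerBoxDim (Ddelta cantorDist δ) X = lowerBoxDim (Ddelta cantorDist δ') X ∧
      upperBoxDim (Ddelta cantorDist δ) X = upperBoxDim (Ddelta cantorDist δ') X) ∧
    acLower cantorDist shift X = lowerBoxDim (Ddelta cantorDist 1) X ∧
    acUpper cantorDist shift X = upperBoxDim (Ddelta cantorDist 1) X :=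
  amorphic_complexity_eq_boxDim_besicovitch_general X
end

section
/- Let X and Y be minimal subshifts of the full shift Σ = A^ℤ. If there exist x ∈ X and y ∈ Y with D_1(x,y) = 0 (i.e. [X] ∩ [Y] ≠ ∅ in the Besicovitch space), then X = Y. -/
open Filter Topology Set MeasureTheory
open scoped ENNReal

/-!
A set of upper density zero cannot meet every window of some fixed length `L`, since that would
force density at least `1 / L`. So `x` and `y` agree on arbitrarily long windows; shifting these to
be centred at the origin gives points of `X` and `Y` that agree on ever larger windows, and by
compactness a limit of the former lies in `X ∩ Y`. Minimal sets that meet coincide.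
-/

/-- A set of natural numbers is *thick* if it contains arbitrarily long intervals. Its complement is
then not syndetic, which is how sets of upper density zero enter the argument. -/
def IsThick (E : Set ℕ) : Prop :=
  ∀ L : ℕ, ∃ m : ℕ, ∀ i < L, m + i ∈ E

/-- A *minimal set* of the dynamical system `(α, f)`: it is minimal among the nonempty closed sets
that are strongly invariant, `f '' E = E`. For `f = shift` these are the minimal subshifts. -/
structure IsMinimalSet {α : Type*} [TopologicalSpace α] (f : α → α) (X : Set α) : Prop where
  nonempty : X.Nonempty
  isClosed : IsClosed X
  image_eq : f '' X = X
  eq_of_subset : ∀ E ⊆ X, E.Nonempty → IsClosed E → f '' E = E → E = X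

section Density

variable {E : Set ℕ} {L : ℕ}

theorem sum_range_indicator_div_le_one (E : Set ℕ) (n : ℕ) :
    (∑ k ∈ Finset.range n, E.indicator (fun _ => (1 : ℝ)) k) / n ≤ 1 := by
  refine div_le_one_of_le₀ ?_ n.cast_nonneg
  calc ∑ k ∈ Finset.range n, E.indicator (fun _ => (1 : ℝ)) k
      ≤ ∑ _k ∈ Finset.range n, (1 : ℝ) :=
        Finset.sum_le_sum fun k _ => indicator_le_self' (fun _ _ => zero_le_one) k
    _ = n := by simp

theorem le_sum_range_mul_indicator (h : ∀ m, ∃ i < L, m + i ∈ E) (k : ℕ) :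
    (k : ℝ) ≤ ∑ j ∈ Finset.range (L * k), E.indicator (fun _ => (1 : ℝ)) j := by
  induction k with
  | zero => simp
  | succ k ih =>
    obtain ⟨i, hi, hiE⟩ := h (L * k)
    have last_block : 1 ≤ ∑ j ∈ Finset.range L, E.indicator (fun _ => (1 : ℝ)) (L * k + j) :=
      calc (1 : ℝ) = E.indicator (fun _ => (1 : ℝ)) (L * k + i) := by rw [indicator_of_mem hiE]
        _ ≤ _ := Finset.single_le_sum (f := fun j => E.indicator (fun _ => (1 : ℝ)) (L * k + j))
          (fun _ _ => indicator_nonneg (fun _ _ => zero_le_one) _) (Finset.mem_range.mpr hi)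
    rw [Nat.mul_succ, Finset.sum_range_add, Nat.cast_succ]
    exact add_le_add ih last_block

theorem inv_le_upperDensity (h : ∀ m, ∃ i < L, m + i ∈ E) : (L : ℝ)⁻¹ ≤ upperDensity E := by
  have hL : 0 < L := let ⟨_, hi, _⟩ := h 0; Nat.zero_lt_of_lt hi
  refine le_limsup_of_frequently_le (frequently_atTop.mpr fun N => ?_)
    (isBoundedUnder_of ⟨1, sum_range_indicator_div_le_one E⟩)
  refine ⟨L * (N + 1), N.le_succ.trans (Nat.le_mul_of_pos_left _ hL), ?_⟩
  calc (L : ℝ)⁻¹ = (N + 1 : ℕ) / (L * (N + 1) : ℕ) := by push_cast; field_simp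
    _ ≤ _ := by gcongr; exact le_sum_range_mul_indicator h (N + 1)

theorem isThick_compl_of_upperDensity_eq_zero (hE : upperDensity E = 0) : IsThick Eᶜ := by
  intro L
  by_contra! h
  obtain ⟨i, hi, -⟩ := h 0
  have hL : (0 : ℝ) < (L : ℝ)⁻¹ := by simpa using Nat.zero_lt_of_lt hi
  have hpos : 0 < upperDensity E :=
    hL.trans_le (inv_le_upperDensity fun m => by simpa only [mem_compl_iff, not_not] using h m)
  exact hpos.ne' hE

end Density

section Shift

variable {A : Type*}

theorem shift_injective : Function.Injective (shift : (ℤ → A) → ℤ → A) :=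
  (add_right_surjective (1 : ℤ)).injective_comp_right

theorem shift_iterate_apply (x : ℤ → A) (m : ℕ) (n : ℤ) : shift^[m] x n = x (n + m) := by
  induction m generalizing n with
  | zero => simp
  | succ m ih =>
    rw [Function.iterate_succ_apply', Nat.cast_succ, add_comm (m : ℤ), ← add_assoc]
    exact ih (n + 1)

theorem IsThick.exists_shift_iterate_eqOn {x y : ℤ → A}
    (h : IsThick {k : ℕ | x k = y k}) (s : Finset ℤ) :
    ∃ m : ℕ, EqOn (shift^[m] x) (shift^[m] y) s := by
  set N := s.sup Int.natAbs
  obtain ⟨m, hm⟩ := h (2 * N + 1)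
  refine ⟨m + N, fun n hn => ?_⟩
  have hnN : n.natAbs ≤ N := Finset.le_sup hn
  have agree : x (m + (n + N).toNat : ℕ) = y (m + (n + N).toNat : ℕ) := hm _ (by lia)
  have index : ((m + (n + N).toNat : ℕ) : ℤ) = n + (m + N : ℕ) := by lia
  rwa [shift_iterate_apply, shift_iterate_apply, ← index]

end Shift

theorem inter_nonempty_of_forall_finset_apply_eq {ι : Type*} {π : ι → Type*}
    [∀ i, TopologicalSpace (π i)] {K C : Set (∀ i, π i)} (hK : IsCompact K) (hC : IsClosed C)
    (h : ∀ s : Finset ι, ∃ u ∈ K, ∃ v ∈ C, ∀ i ∈ s, u i = v i) : (K ∩ C).Nonempty := by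
  classical
  choose u huK v hvC huv using h
  obtain ⟨a, haK, ha⟩ : ∃ a ∈ K, MapClusterPt a atTop u :=
    hK.exists_mapClusterPt (tendsto_principal.mpr (.of_forall huK))
  refine ⟨a, haK, hC.closure_eq ▸ mem_closure_iff_nhds.mpr fun t ht => ?_⟩
  rw [nhds_pi, Filter.mem_pi'] at ht
  obtain ⟨I, U, hU, hUt⟩ := ht
  have hbox : (I : Set ι).pi U ∈ 𝓝 a := set_pi_mem_nhds I.finite_toSet fun i _ => hU i
  obtain ⟨s, hus, hIs⟩ := ((ha.frequently hbox).and_eventually (eventually_ge_atTop I)).exists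
  exact ⟨v s, hUt fun i hi => huv s i (hIs hi) ▸ hus i hi, hvC s⟩

theorem IsMinimalSet.eq_of_inter_nonempty {α : Type*} [TopologicalSpace α] {f : α → α}
    {X Y : Set α} (hf : Function.Injective f) (hX : IsMinimalSet f X) (hY : IsMinimalSet f Y)
    (hXY : (X ∩ Y).Nonempty) : X = Y := by
  have hcl : IsClosed (X ∩ Y) := hX.isClosed.inter hY.isClosed
  have himage : f '' (X ∩ Y) = X ∩ Y := by rw [image_inter hf, hX.image_eq, hY.image_eq]
  calc X = X ∩ Y := (hX.eq_of_subset _ inter_subset_left hXY hcl himage).symm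
    _ = Y := hY.eq_of_subset _ inter_subset_right hXY hcl himage

theorem minimal_subshifts_eq_of_besicovitch_classes_meet_general
    {A : Type*} [TopologicalSpace A] {X Y : Set (ℤ → A)}
    (hX : IsMinimalSet shift X) (hXc : IsCompact X) (hY : IsMinimalSet shift Y)
    {x y : ℤ → A} (hx : x ∈ X) (hy : y ∈ Y) (hxy : IsThick {k : ℕ | x k = y k}) :
    X = Y := by
  refine hX.eq_of_inter_nonempty shift_injective hY
    (inter_nonempty_of_forall_finset_apply_eq hXc hY.isClosed fun s => ?_)
  obtain ⟨m, hm⟩ := hxy.exists_shift_iterate_eqOn s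
  have hXs : MapsTo shift X X := mapsTo_iff_image_subset.mpr hX.image_eq.le
  have hYs : MapsTo shift Y Y := mapsTo_iff_image_subset.mpr hY.image_eq.le
  exact ⟨shift^[m] x, hXs.iterate m hx, shift^[m] y, hYs.iterate m hy, hm⟩

/-- If two minimal subshifts `X`, `Y` contain points `x ∈ X`, `y ∈ Y`
with `D_1(x,y) = 0` (i.e. `[X] ∩ [Y] ≠ ∅` in the Besicovitch space), then `X = Y`. -/
theorem minimal_subshifts_eq_of_besicovitch_classes_meet
    {A : Type} [Fintype A] [TopologicalSpace A] [DiscreteTopology A]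
    (X Y : Set (ℤ → A))
    (hXne : X.Nonempty) (hXcl : IsClosed X) (hXinv : shift '' X = X)
    (hXmin : ∀ E ⊆ X, E.Nonempty → IsClosed E → shift '' E = E → E = X)
    (hYne : Y.Nonempty) (hYcl : IsClosed Y) (hYinv : shift '' Y = Y)
    (hYmin : ∀ E ⊆ Y, E.Nonempty → IsClosed E → shift '' E = E → E = Y)
    (x : ℤ → A) (hx : x ∈ X) (y : ℤ → A) (hy : y ∈ Y) (hD : besD1 x y = 0) :
    X = Y := by
  have hxy : IsThick {k : ℕ | x k = y k} := by
    simpa only [compl_ofPred, not_not] using isThick_compl_of_upperDensity_eq_zero hD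
  exact minimal_subshifts_eq_of_besicovitch_classes_meet_general
    ⟨hXne, hXcl, hXinv, hXmin⟩ hXcl.isCompact ⟨hYne, hYcl, hYinv, hYmin⟩ hx hy hxy
end
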